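/- Let Q_t be the Kac walk of length t on ℝ^d. Then for any K ≥ 2 and any t ≥ 0, P[ max_{i,j ∈ {1,…,d}} |Q_t[i,j]| ≥ K √((log d)/d) ] ≤ 2 d³ exp(−t/(2d)) + 2 d^{5/2} exp(−K² (log d)/2). -/

import Mathlib

noncomputable section

open MeasureTheory Real
open scoped ENNReal

namespace KacJL

instance matrixMeasurableSpace {m n : Type*} : MeasurableSpace (Matrix m n ℝ) :=
  inferInstanceAs (MeasurableSpace (m → n → ℝ))

/-- The rotation by angle `θ` in the `(i,j)` coordinate plane of `ℝ^d`. -/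
def rotM (d : ℕ) (i j : Fin d) (θ : ℝ) : Matrix (Fin d) (Fin d) ℝ :=
  Matrix.of fun k l =>
    if k = i ∧ l = i then Real.cos θ
    else if k = i ∧ l = j then -Real.sin θ
    else if k = j ∧ l = i then Real.sin θ
    else if k = j ∧ l = j then Real.cos θ
    else if k = l then 1 else 0

/-- The uniform distribution on pairs of distinct coordinates in `Fin d`. -/
def pairUniform (d : ℕ) : Measure (Fin d × Fin d) :=
  ((d * (d - 1) : ℕ) : ℝ≥0∞)⁻¹ •
    (Measure.count.restrict {p : Fin d × Fin d | p.1 ≠ p.2})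

/-- The uniform distribution on `[0, 2π)`. -/
def angleUniform : Measure ℝ :=
  (ENNReal.ofReal (2 * Real.pi))⁻¹ • (volume.restrict (Set.Ico 0 (2 * Real.pi)))

/-- The distribution of the update variables of one step of the Kac walk. -/
def kacParam (d : ℕ) : Measure ((Fin d × Fin d) × ℝ) :=
  (pairUniform d).prod angleUniform

/-- The product `R_{i_T,j_T,θ_T} ⋯ R_{i_1,j_1,θ_1}` of the rotations determined by the
update variables `ω`. -/
def kacMatrix {d T : ℕ} (ω : Fin T → (Fin d × Fin d) × ℝ) : Matrix (Fin d) (Fin d) ℝ :=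
  ((List.ofFn fun t => rotM d (ω t).1.1 (ω t).1.2 (ω t).2).reverse).prod

/-- The law of the Kac walk of length `T` on `ℝ^d`. -/
def kacMeasure (d T : ℕ) : Measure (Matrix (Fin d) (Fin d) ℝ) :=
  Measure.map kacMatrix (Measure.pi fun _ : Fin T => kacParam d)

/-- The Euclidean norm on `ℝ^d`. -/
def l2norm {d : ℕ} (x : Fin d → ℝ) : ℝ := Real.sqrt (∑ i, x i ^ 2)


lemma kacMatrix_succ {d T : ℕ} (ω : Fin (T+1) → (Fin d × Fin d) × ℝ) :
    kacMatrix ω = kacMatrix (fun t => ω (Fin.succ t)) * rotM d (ω 0).1.1 (ω 0).1.2 (ω 0).2 := by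
  simp [kacMatrix, List.ofFn_succ]

lemma measurable_rot (d : ℕ) (k l : Fin d) :
    Measurable fun p : (Fin d × Fin d) × ℝ => rotM d p.1.1 p.1.2 p.2 k l := by
  apply measurable_from_prod_countable_right
  rintro ⟨i, j⟩
  simp only [rotM, Matrix.of_apply]
  split_ifs <;> fun_prop

lemma measurable_kac (d T : ℕ) : ∀ (k l : Fin d),
    Measurable fun ω : Fin T → (Fin d × Fin d) × ℝ => kacMatrix ω k l := by
  induction T with
  | zero => intro k l; simp [kacMatrix]
  | succ T ih =>
    intro k l
    simp only [kacMatrix_succ, Matrix.mul_apply]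
    refine Finset.measurable_sum _ fun m _ => ?_
    refine ((ih k m).comp (by fun_prop)).mul ((measurable_rot d m l).comp (measurable_pi_apply 0))

lemma measurable_kacv (d T : ℕ) :
    Measurable fun q : (Fin T → (Fin d × Fin d) × ℝ) × (Fin d → ℝ) =>
      (kacMatrix q.1).mulVec q.2 := by
  refine measurable_pi_lambda _ fun k => ?_
  simp only [Matrix.mulVec, dotProduct]
  refine Finset.measurable_sum _ fun m _ => ?_
  exact ((measurable_kac d T k m).comp measurable_fst).mul (by fun_prop)

lemma measurable_kacv2 (d T : ℕ) {δ : Type*} [MeasurableSpace δ]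
    (a : δ → (Fin T → (Fin d × Fin d) × ℝ)) (b : δ → (Fin d → ℝ))
    (ha : Measurable a) (hb : Measurable b) :
    Measurable fun q : δ => (kacMatrix (a q)).mulVec (b q) := by
  refine measurable_pi_lambda _ fun k => ?_
  simp only [Matrix.mulVec, dotProduct]
  refine Finset.measurable_sum _ fun m _ => ?_
  exact ((measurable_kac d T k m).comp ha).mul ((measurable_pi_apply m).comp hb)

lemma measurable_rotv (d : ℕ) (x : Fin d → ℝ) :
    Measurable fun p : (Fin d × Fin d) × ℝ => (rotM d p.1.1 p.1.2 p.2).mulVec x := by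
  refine measurable_pi_lambda _ fun k => ?_
  simp only [Matrix.mulVec, dotProduct]
  refine Finset.measurable_sum _ fun m _ => ?_
  exact (measurable_rot d k m).mul_const _

def EK (d T : ℕ) (f : (Fin d → ℝ) → ℝ≥0∞) (x : Fin d → ℝ) : ℝ≥0∞ :=
  ∫⁻ ω, f ((kacMatrix ω).mulVec x) ∂(Measure.pi fun _ : Fin T => kacParam d)

instance : IsProbabilityMeasure angleUniform := by
  constructor
  have h : ENNReal.ofReal (2 * Real.pi) ≠ 0 := by simp [Real.pi_pos]
  simp only [angleUniform, Measure.smul_apply, Measure.restrict_apply_univ, Real.volume_Ico,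
    sub_zero, smul_eq_mul]
  exact ENNReal.inv_mul_cancel h ENNReal.ofReal_ne_top

lemma lintegral_pair (d : ℕ) (f : Fin d × Fin d → ℝ≥0∞) :
    ∫⁻ p, f p ∂(pairUniform d) = ((d * (d - 1) : ℕ) : ℝ≥0∞)⁻¹ *
      ∑ p ∈ (Finset.univ : Finset (Fin d)).offDiag, f p := by
  rw [pairUniform, lintegral_smul_measure, smul_eq_mul]
  congr 1
  have : {p : Fin d × Fin d | p.1 ≠ p.2} = ((Finset.univ : Finset (Fin d)).offDiag : Set _) := by
    ext p; simp
  rw [this, ← lintegral_indicator (by measurability), lintegral_count, tsum_fintype,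
    ← Finset.sum_indicator_subset f (Finset.subset_univ _)]

lemma pair_prob {d : ℕ} (hd : 2 ≤ d) : IsProbabilityMeasure (pairUniform d) := by
  constructor
  rw [← lintegral_one, lintegral_pair]
  simp only [Finset.sum_const, Finset.offDiag_card, Finset.card_univ, Fintype.card_fin, nsmul_eq_mul, mul_one]
  rw [← Nat.mul_sub_one]
  apply ENNReal.inv_mul_cancel
  · norm_cast
    exact Nat.mul_ne_zero (by omega) (by omega)
  · exact ENNReal.natCast_ne_top _

lemma kac_prob {d : ℕ} (hd : 2 ≤ d) : IsProbabilityMeasure (kacParam d) := by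
  have := pair_prob hd
  unfold kacParam; infer_instance

lemma measurable_EK {d T : ℕ} (hd : 2 ≤ d) {f : (Fin d → ℝ) → ℝ≥0∞} (hf : Measurable f) :
    Measurable (EK d T f) := by
  have := kac_prob hd
  exact Measurable.lintegral_prod_left (hf.comp (measurable_kacv d T))

lemma EK_succ {d T : ℕ} (hd : 2 ≤ d) {f : (Fin d → ℝ) → ℝ≥0∞} (hf : Measurable f)
    (x : Fin d → ℝ) :
    EK d (T+1) f x = ∫⁻ p, EK d T f ((rotM d p.1.1 p.1.2 p.2).mulVec x) ∂(kacParam d) := by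
  have := kac_prob hd
  have mp := measurePreserving_piFinSuccAbove (fun _ : Fin (T+1) => kacParam d) 0
  have h2 : Measurable fun q : ((Fin d × Fin d) × ℝ) × (Fin T → (Fin d × Fin d) × ℝ) =>
      (rotM d q.1.1.1 q.1.1.2 q.1.2).mulVec x :=
    (measurable_rotv d x).comp measurable_fst
  have hm : Measurable fun q : ((Fin d × Fin d) × ℝ) × (Fin T → (Fin d × Fin d) × ℝ) =>
      f ((kacMatrix q.2).mulVec ((rotM d q.1.1.1 q.1.1.2 q.1.2).mulVec x)) :=
    hf.comp (measurable_kacv2 d T _ _ measurable_snd h2)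
  have e1 : ∀ ω : Fin (T+1) → (Fin d × Fin d) × ℝ, MeasurableEquiv.piFinSuccAbove (fun _ => (Fin d × Fin d) × ℝ) 0 ω
      = (ω 0, fun t => ω (Fin.succ t)) := fun ω => rfl
  have e2 := mp.lintegral_comp hm
  simp only [e1] at e2
  have e3 := lintegral_prod (μ := kacParam d) (ν := Measure.pi fun _ : Fin T => kacParam d) _ hm.aemeasurable
  unfold EK
  refine Eq.trans ?_ (e2.trans e3)
  refine lintegral_congr fun ω => ?_
  rw [kacMatrix_succ, ← Matrix.mulVec_mulVec]

lemma angle_shift (F : ℝ → ℝ≥0∞) (hF : Measurable F) (hp : ∀ θ, F (θ + 2 * π) = F θ) (a : ℝ) :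
    ∫⁻ θ, F (θ + a) ∂angleUniform = ∫⁻ θ, F θ ∂angleUniform := by
  have hp' : Function.Periodic F (2 * π) := hp
  simp only [angleUniform, lintegral_smul_measure, smul_eq_mul]
  congr 1
  have h1 : ∫⁻ θ in Set.Ico 0 (2*π), F (θ + a) = ∫⁻ θ in Set.Ico a (a + 2*π), F θ := by
    have := (measurePreserving_add_right volume a).setLIntegral_comp_preimage
      (s := Set.Ico a (a+2*π)) measurableSet_Ico hF
    rw [← this]
    congr 2
    ext θ; simp [add_comm a]
  rw [h1, setLIntegral_congr Ico_ae_eq_Ioc, setLIntegral_congr Ico_ae_eq_Ioc]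
  have := (isAddFundamentalDomain_Ioc Real.two_pi_pos a).setLIntegral_eq
    (isAddFundamentalDomain_Ioc Real.two_pi_pos 0) F ?_
  · simpa using this
  · rintro ⟨g, hg⟩ θ
    obtain ⟨n, rfl⟩ := AddSubgroup.mem_zmultiples_iff.1 hg
    have := hp'.zsmul n θ
    rw [add_comm] at this
    exact this

lemma sum_split {d : ℕ} {i j : Fin d} (h : i ≠ j) (f : Fin d → ℝ) :
    ∑ k, f k = f i + f j + ∑ k ∈ (Finset.univ.erase i).erase j, f k := by
  rw [← Finset.add_sum_erase _ _ (Finset.mem_univ i), add_assoc,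
    ← Finset.add_sum_erase (Finset.univ.erase i) f (a := j) (by simp [h.symm])]

def circ {d : ℕ} (i j : Fin d) (x : Fin d → ℝ) (θ : ℝ) : Fin d → ℝ :=
  fun k => if k = i then √(x i ^ 2 + x j ^ 2) * cos θ
    else if k = j then √(x i ^ 2 + x j ^ 2) * sin θ else x k

lemma rot_mulVec {d : ℕ} {i j : Fin d} (h : i ≠ j) (θ : ℝ) (x : Fin d → ℝ) :
    (rotM d i j θ).mulVec x = fun k => if k = i then x i * cos θ - x j * sin θ
      else if k = j then x i * sin θ + x j * cos θ else x k := by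
  funext k
  simp only [Matrix.mulVec, dotProduct, rotM, Matrix.of_apply]
  rw [sum_split h]
  have hz : ∀ l ∈ (Finset.univ.erase i).erase j, l ≠ i ∧ l ≠ j := by
    intro l hl; simp at hl; tauto
  have hs : ∑ l ∈ (Finset.univ.erase i).erase j, (if k = i ∧ l = i then cos θ
      else if k = i ∧ l = j then -sin θ else if k = j ∧ l = i then sin θ
      else if k = j ∧ l = j then cos θ else if k = l then 1 else 0) * x l
      = if k = i ∨ k = j then 0 else x k := by
    rw [Finset.sum_congr rfl (g := fun l => if k = l then x l else 0)]
    · rw [Finset.sum_ite_eq]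
      simp only [Finset.mem_erase, Finset.mem_univ]
      by_cases h1 : k = i <;> by_cases h2 : k = j <;> simp [h1, h2]
    · intro l hl
      obtain ⟨h1, h2⟩ := hz l hl
      simp [h1, h2]
  rw [hs]
  by_cases h1 : k = i
  · subst h1; simp [h, h.symm]; ring
  · by_cases h2 : k = j
    · subst h2; simp [h, h.symm]; ring
    · simp [h1, h2]

lemma rot_circ {d : ℕ} {i j : Fin d} (h : i ≠ j) (x : Fin d → ℝ) :
    ∃ a : ℝ, ∀ θ, (rotM d i j θ).mulVec x = circ i j x (θ + a) := by
  let z : ℂ := ⟨x i, x j⟩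
  have hn : ‖z‖ = √(x i ^ 2 + x j ^ 2) := by
    rw [Complex.norm_def, Complex.normSq_mk]; congr 1; ring
  have hc : √(x i ^ 2 + x j ^ 2) * cos z.arg = x i := by
    rw [← hn]; exact Complex.norm_mul_cos_arg z
  have hs : √(x i ^ 2 + x j ^ 2) * sin z.arg = x j := by
    rw [← hn]; exact Complex.norm_mul_sin_arg z
  refine ⟨z.arg, fun θ => ?_⟩
  rw [rot_mulVec h]
  funext k
  simp only [circ]
  have e1 : x i * cos θ - x j * sin θ = √(x i ^ 2 + x j ^ 2) * cos (θ + z.arg) := by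
    rw [cos_add]; linear_combination (-cos θ) * hc + sin θ * hs
  have e2 : x i * sin θ + x j * cos θ = √(x i ^ 2 + x j ^ 2) * sin (θ + z.arg) := by
    rw [sin_add]; linear_combination (-sin θ) * hc - cos θ * hs
  rw [e1, e2]

lemma measurable_circ {d : ℕ} (i j : Fin d) (x : Fin d → ℝ) : Measurable (circ i j x) := by
  refine measurable_pi_lambda _ fun k => ?_
  simp only [circ]
  split_ifs <;> fun_prop

lemma lint_rot {d : ℕ} {i j : Fin d} (h : i ≠ j) (x : Fin d → ℝ) {F : (Fin d → ℝ) → ℝ≥0∞}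
    (hF : Measurable F) :
    ∫⁻ θ, F ((rotM d i j θ).mulVec x) ∂angleUniform = ∫⁻ θ, F (circ i j x θ) ∂angleUniform := by
  obtain ⟨a, ha⟩ := rot_circ h x
  have ha' : ∀ θ, F ((rotM d i j θ).mulVec x) = F (circ i j x (θ + a)) := fun θ => by rw [ha]
  rw [lintegral_congr ha']
  refine angle_shift (fun θ => F (circ i j x θ)) (hF.comp (measurable_circ i j x)) ?_ a
  intro θ
  have : circ i j x (θ + 2 * π) = circ i j x θ := by
    funext k; simp only [circ, cos_add_two_pi, sin_add_two_pi]
  simp only [this]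

def DD {d : ℕ} (x y : Fin d → ℝ) : ℝ := ∑ k, (x k ^ 2 - y k ^ 2) ^ 2

lemma circ_norm {d : ℕ} {i j : Fin d} (h : i ≠ j) (x : Fin d → ℝ) (θ : ℝ) :
    ∑ k, circ i j x θ k ^ 2 = ∑ k, x k ^ 2 := by
  rw [sum_split h, sum_split h (fun k => x k ^ 2)]
  have : ∑ k ∈ (Finset.univ.erase i).erase j, circ i j x θ k ^ 2
      = ∑ k ∈ (Finset.univ.erase i).erase j, x k ^ 2 := by
    refine Finset.sum_congr rfl fun k hk => ?_
    simp at hk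
    simp [circ, hk.1, hk.2]
  rw [this]
  simp only [circ, h.symm, if_true, if_false, mul_pow, Real.sq_sqrt (by positivity : 0 ≤ x i ^ 2 + x j ^ 2)]
  linear_combination (x i ^ 2 + x j ^ 2) * cos_sq_add_sin_sq θ

lemma circ_DD {d : ℕ} {i j : Fin d} (h : i ≠ j) (x y : Fin d → ℝ) (θ : ℝ) :
    DD (circ i j x θ) (circ i j y θ) =
      (DD x y - (x i ^ 2 - y i ^ 2) ^ 2 - (x j ^ 2 - y j ^ 2) ^ 2) +
      ((x i ^ 2 - y i ^ 2) + (x j ^ 2 - y j ^ 2)) ^ 2 * (cos θ ^ 4 + sin θ ^ 4) := by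
  unfold DD
  rw [sum_split h, sum_split h (fun k => (x k ^ 2 - y k ^ 2) ^ 2)]
  have : ∑ k ∈ (Finset.univ.erase i).erase j, (circ i j x θ k ^ 2 - circ i j y θ k ^ 2) ^ 2
      = ∑ k ∈ (Finset.univ.erase i).erase j, (x k ^ 2 - y k ^ 2) ^ 2 := by
    refine Finset.sum_congr rfl fun k hk => ?_
    simp at hk
    simp [circ, hk.1, hk.2]
  rw [this]
  simp only [circ, h.symm, if_true, if_false, mul_pow,
    Real.sq_sqrt (by positivity : 0 ≤ x i ^ 2 + x j ^ 2),
    Real.sq_sqrt (by positivity : 0 ≤ y i ^ 2 + y j ^ 2)]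
  ring

lemma angle_int (A B : ℝ) (hA : 0 ≤ A) (hB : 0 ≤ B) :
    ∫⁻ θ, ENNReal.ofReal (A + B * (cos θ ^ 4 + sin θ ^ 4)) ∂angleUniform
      = ENNReal.ofReal (A + 3 / 4 * B) := by
  have hpi := Real.two_pi_pos
  rw [angleUniform, lintegral_smul_measure, smul_eq_mul]
  have hc : Continuous fun θ : ℝ => A + B * (cos θ ^ 4 + sin θ ^ 4) := by fun_prop
  rw [setLIntegral_congr Ico_ae_eq_Ioc, ← ofReal_integral_eq_lintegral_ofReal
    ((hc.intervalIntegrable 0 (2*π)).1) (Filter.Eventually.of_forall fun θ => by positivity),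
    ← intervalIntegral.integral_of_le hpi.le]
  have : ∫ θ in (0:ℝ)..(2*π), (A + B * (cos θ ^ 4 + sin θ ^ 4)) = (A + 3 / 4 * B) * (2 * π) := by
    have hd : ∀ θ ∈ Set.uIcc 0 (2*π), HasDerivAt
        (fun θ => (A + 3/4 * B) * θ + B * (sin (4*θ) / 16)) (A + B * (cos θ ^ 4 + sin θ ^ 4)) θ := by
      intro θ _
      have h1 : HasDerivAt (fun θ : ℝ => 4 * θ) 4 θ := by
        simpa using (hasDerivAt_id θ).const_mul (4:ℝ)
      have h2 := (((hasDerivAt_id θ).const_mul (A + 3/4*B)).add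
        (((h1.sin).div_const 16).const_mul B))
      refine h2.congr_deriv ?_
      have e : cos (4 * θ) = 2 * (2 * cos θ ^ 2 - 1)^2 - 1 := by
        rw [show 4 * θ = 2 * (2 * θ) by ring, cos_two_mul, cos_two_mul]
      have e2 : sin θ ^ 4 = (1 - cos θ ^ 2) ^ 2 := by
        rw [← sin_sq]; ring
      rw [e, e2]; ring
    rw [intervalIntegral.integral_eq_sub_of_hasDerivAt hd (hc.intervalIntegrable _ _)]
    have : sin (4 * (2 * π)) = 0 := by
      have := Real.sin_nat_mul_pi 8
      rw [← this]; congr 1; push_cast; ring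
    rw [this]; simp
  rw [this, mul_comm (A + 3/4*B), ENNReal.ofReal_mul hpi.le, ← mul_assoc, ENNReal.inv_mul_cancel
    (by simp [Real.pi_pos]) ENNReal.ofReal_ne_top, one_mul]

lemma DD_nonneg {d : ℕ} (x y : Fin d → ℝ) : 0 ≤ DD x y :=
  Finset.sum_nonneg fun _ _ => sq_nonneg _

lemma DD_pair {d : ℕ} {i j : Fin d} (h : i ≠ j) (x y : Fin d → ℝ) :
    0 ≤ DD x y - (x i ^ 2 - y i ^ 2) ^ 2 - (x j ^ 2 - y j ^ 2) ^ 2 := by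
  unfold DD
  rw [sum_split h]
  have : 0 ≤ ∑ k ∈ (Finset.univ.erase i).erase j, (x k ^ 2 - y k ^ 2) ^ 2 :=
    Finset.sum_nonneg fun _ _ => sq_nonneg _
  linarith

def WW {d : ℕ} (u : Fin d → ℝ) (p : Fin d × Fin d) : ℝ :=
  (∑ k, u k ^ 2) - u p.1 ^ 2 - u p.2 ^ 2 + 3 / 4 * (u p.1 + u p.2) ^ 2

lemma sum_WW {d : ℕ} (u : Fin d → ℝ) (hu : ∑ k, u k = 0) :
    ∑ p ∈ (Finset.univ : Finset (Fin d)).offDiag, WW u p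
      = ((d:ℝ) ^ 2 - 3 / 2 * d - 1) * ∑ k, u k ^ 2 := by
  have h1 : ∑ p ∈ (Finset.univ : Finset (Fin d)).diag, WW u p
      + ∑ p ∈ (Finset.univ : Finset (Fin d)).offDiag, WW u p = ∑ i, ∑ j, WW u (i, j) := by
    rw [← Finset.sum_union (Finset.disjoint_diag_offDiag _), Finset.diag_union_offDiag,
      Finset.sum_product]
  have h2 : ∑ p ∈ (Finset.univ : Finset (Fin d)).diag, WW u p
      = (d + 1) * ∑ k, u k ^ 2 := by
    rw [Finset.sum_diag]
    have : ∀ i, WW u (i, i) = (∑ k, u k ^ 2) + u i ^ 2 := fun i => by simp only [WW]; ring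
    simp only [this, Finset.sum_add_distrib, Finset.sum_const, Finset.card_univ, Fintype.card_fin, nsmul_eq_mul]
    ring
  have h3 : ∑ i, ∑ j, WW u (i, j) = ((d:ℝ)^2 - d / 2) * ∑ k, u k ^ 2 := by
    have e : ∀ i j, WW u (i, j) = (∑ k, u k ^ 2) - 1/4 * u i ^ 2 - 1/4 * u j ^ 2 + 3 / 2 * u i * u j :=
      fun i j => by simp only [WW]; ring
    simp only [e, Finset.sum_add_distrib, Finset.sum_sub_distrib, ← Finset.mul_sum, hu, Finset.sum_const, Finset.card_univ, Fintype.card_fin, nsmul_eq_mul, mul_zero]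
    ring
  linarith

lemma kac_step {d : ℕ} (hd : 2 ≤ d) {F G : (Fin d → ℝ) → ℝ≥0∞} (hF : Measurable F)
    (hG : Measurable G) {c : ℝ} (hc : 0 ≤ c)
    (h : ∀ x y : Fin d → ℝ, ∑ k, x k ^ 2 = ∑ k, y k ^ 2 → F x ≤ G y + ENNReal.ofReal (c * DD x y))
    (x y : Fin d → ℝ) (hxy : ∑ k, x k ^ 2 = ∑ k, y k ^ 2) :
    ∫⁻ p, F ((rotM d p.1.1 p.1.2 p.2).mulVec x) ∂(kacParam d) ≤
      ∫⁻ p, G ((rotM d p.1.1 p.1.2 p.2).mulVec y) ∂(kacParam d)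
        + ENNReal.ofReal (c * (1 - 1 / (2 * d)) * DD x y) := by
  have := pair_prob hd
  unfold kacParam
  have hF' : Measurable fun p : (Fin d × Fin d) × ℝ => F ((rotM d p.1.1 p.1.2 p.2).mulVec x) :=
    hF.comp (measurable_rotv d x)
  have hG' : Measurable fun p : (Fin d × Fin d) × ℝ => G ((rotM d p.1.1 p.1.2 p.2).mulVec y) :=
    hG.comp (measurable_rotv d y)
  rw [lintegral_prod _ hF'.aemeasurable, lintegral_prod _ hG'.aemeasurable, lintegral_pair, lintegral_pair]
  simp only
  set u : Fin d → ℝ := fun k => x k ^ 2 - y k ^ 2 with hu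
  have hu0 : ∑ k, u k = 0 := by simp [hu, hxy]
  have hDD : DD x y = ∑ k, u k ^ 2 := rfl
  have key : ∀ p ∈ (Finset.univ : Finset (Fin d)).offDiag,
      ∫⁻ θ, F ((rotM d p.1 p.2 θ).mulVec x) ∂angleUniform ≤
      ∫⁻ θ, G ((rotM d p.1 p.2 θ).mulVec y) ∂angleUniform + ENNReal.ofReal (c * WW u p) := by
    rintro ⟨i, j⟩ hp
    have hij : i ≠ j := by simpa using hp
    simp only
    rw [lint_rot hij x hF, lint_rot hij y hG]
    have e : ENNReal.ofReal (c * WW u (i, j)) = ∫⁻ θ, ENNReal.ofReal (c * DD (circ i j x θ) (circ i j y θ)) ∂angleUniform := by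
      have := angle_int (c * (DD x y - (x i ^ 2 - y i ^ 2) ^ 2 - (x j ^ 2 - y j ^ 2) ^ 2))
        (c * ((x i ^ 2 - y i ^ 2) + (x j ^ 2 - y j ^ 2)) ^ 2) (mul_nonneg hc (DD_pair hij x y))
        (by positivity)
      refine Eq.trans ?_ (this.symm.trans ?_)
      · congr 1
        simp only [WW, hDD, hu]
        ring
      · refine lintegral_congr fun θ => ?_
        rw [circ_DD hij]
        congr 1
        ring
    have hGc : Measurable fun θ => G (circ i j y θ) := hG.comp (measurable_circ i j y)
    rw [e, ← lintegral_add_left hGc]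
    refine lintegral_mono fun θ => h _ _ ?_
    rw [circ_norm hij, circ_norm hij, hxy]
  have hW : ∀ p ∈ (Finset.univ : Finset (Fin d)).offDiag, 0 ≤ c * WW u p := by
    rintro ⟨i, j⟩ hp
    have hij : i ≠ j := by simpa using hp
    have := DD_pair hij x y
    refine mul_nonneg hc (add_nonneg this (by positivity))
  have hd' : (2:ℝ) ≤ d := by exact_mod_cast hd
  calc _ ≤ ((d * (d - 1) : ℕ) : ℝ≥0∞)⁻¹ * ∑ p ∈ (Finset.univ : Finset (Fin d)).offDiag,
        (∫⁻ θ, G ((rotM d p.1 p.2 θ).mulVec y) ∂angleUniform + ENNReal.ofReal (c * WW u p)) := by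
        gcongr with p hp
        exact key p hp
    _ = _ + ((d * (d - 1) : ℕ) : ℝ≥0∞)⁻¹ * ENNReal.ofReal (c * (((d:ℝ) ^ 2 - 3 / 2 * d - 1) * DD x y)) := by
        rw [Finset.sum_add_distrib, mul_add, ← ENNReal.ofReal_sum_of_nonneg hW, ← Finset.mul_sum,
          sum_WW u hu0, hDD]
    _ ≤ _ := by
        gcongr
        have e : ((d * (d - 1) : ℕ) : ℝ≥0∞)⁻¹ = ENNReal.ofReal ((d * (d - 1) : ℝ)⁻¹) := by
          rw [ENNReal.ofReal_inv_of_pos (by nlinarith), ← ENNReal.ofReal_natCast]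
          push_cast [Nat.cast_sub (by omega : 1 ≤ d)]
          rfl
        rw [e, ← ENNReal.ofReal_mul (by rw [inv_nonneg]; nlinarith)]
        apply ENNReal.ofReal_le_ofReal
        rw [inv_mul_le_iff₀ (by nlinarith)]
        have : (d * (d-1) : ℝ) * (c * (1 - 1/(2*d)) * DD x y) = c * ((d-1)*(d-1/2) * DD x y) := by
          field_simp
        rw [this]
        have := DD_nonneg x y
        gcongr
        nlinarith

lemma EK_zero {d : ℕ} (f : (Fin d → ℝ) → ℝ≥0∞) (x : Fin d → ℝ) : EK d 0 f x = f x := by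
  simp [EK, kacMatrix]

lemma coupling {d : ℕ} (hd : 2 ≤ d) {f g : (Fin d → ℝ) → ℝ≥0∞} (hf : Measurable f)
    (hg : Measurable g) {c : ℝ} (hc : 0 ≤ c)
    (h : ∀ x y : Fin d → ℝ, ∑ k, x k ^ 2 = ∑ k, y k ^ 2 → f x ≤ g y + ENNReal.ofReal (c * DD x y))
    (T : ℕ) : ∀ (x y : Fin d → ℝ), ∑ k, x k ^ 2 = ∑ k, y k ^ 2 →
    EK d T f x ≤ EK d T g y + ENNReal.ofReal (c * (1 - 1 / (2 * d)) ^ T * DD x y) := by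
  have hd' : (2:ℝ) ≤ d := by exact_mod_cast hd
  have hρ : (0:ℝ) ≤ 1 - 1 / (2 * d) := by
    rw [sub_nonneg, div_le_one (by linarith)]; linarith
  induction T with
  | zero => intro x y hxy; simpa [EK_zero] using h x y hxy
  | succ T ih =>
    intro x y hxy
    rw [EK_succ hd hf, EK_succ hd hg, pow_succ, ← mul_assoc]
    exact kac_step hd (measurable_EK hd hf) (measurable_EK hd hg) (by positivity) ih x y hxy

/-- scaled sign vectors -/
def sg {d : ℕ} (ε : Fin d → Bool) : Fin d → ℝ := fun k => (if ε k then 1 else -1) / √d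

lemma sg_sq {d : ℕ} (ε : Fin d → Bool) (k : Fin d) : sg ε k ^ 2 = 1 / d := by
  simp only [sg, div_pow, Real.sq_sqrt (Nat.cast_nonneg d)]
  split_ifs <;> simp

lemma sg_mgf {d : ℕ} (hd : 0 < d) (a : Fin d → ℝ) (ha : ∑ k, a k ^ 2 = 1) (l : ℝ) :
    ∑ ε : Fin d → Bool, exp (l * ∑ k, a k * sg ε k) ≤ 2 ^ d * exp (l ^ 2 / (2 * d)) := by
  have hd' : (0:ℝ) < d := by exact_mod_cast hd
  have h1 : ∀ ε : Fin d → Bool, exp (l * ∑ k, a k * sg ε k)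
      = ∏ k, exp (l * (a k * ((if ε k then 1 else -1) / √d))) := by
    intro ε; rw [Finset.mul_sum, exp_sum]; rfl
  simp only [h1]
  have h2 := Finset.prod_univ_sum (fun _ : Fin d => (Finset.univ : Finset Bool))
    (fun k b => exp (l * (a k * ((if b then 1 else -1) / √d))))
  rw [Fintype.piFinset_univ] at h2
  rw [← h2]
  have h3 : ∀ k ∈ (Finset.univ : Finset (Fin d)), ∑ b : Bool, exp (l * (a k * ((if b then 1 else -1) / √d)))
      ≤ 2 * exp (l ^ 2 / (2 * d) * a k ^ 2) := by
    intro k _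
    have := Real.cosh_le_exp_half_sq (l * a k / √d)
    rw [Real.cosh_eq, div_pow, Real.sq_sqrt hd'.le] at this
    simp only [Fintype.sum_bool, if_true, Bool.false_eq_true, if_false]
    have e1 : l * (a k * (1 / √d)) = l * a k / √d := by ring
    have e2 : l * (a k * (-1 / √d)) = -(l * a k / √d) := by ring
    have e3 : l ^ 2 / (2 * d) * a k ^ 2 = (l * a k) ^ 2 / d / 2 := by field_simp
    rw [e1, e2, e3]; linarith
  refine (Finset.prod_le_prod (fun k _ => by positivity) h3).trans ?_
  rw [Finset.prod_mul_distrib, ← exp_sum, ← Finset.mul_sum, ha]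
  simp

lemma rot_transpose {d : ℕ} {i j : Fin d} (h : i ≠ j) (θ : ℝ) :
    (rotM d i j θ).transpose = rotM d i j (-θ) := by
  ext k l
  simp only [rotM, Matrix.transpose_apply, Matrix.of_apply, cos_neg, sin_neg, neg_neg]
  by_cases h1 : k = i <;> by_cases h2 : l = i <;> by_cases h3 : k = j <;> by_cases h4 : l = j <;>
    simp_all [eq_comm]

lemma rot_norm {d : ℕ} {i j : Fin d} (h : i ≠ j) (θ : ℝ) (x : Fin d → ℝ) :
    ∑ k, (rotM d i j θ).mulVec x k ^ 2 = ∑ k, x k ^ 2 := by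
  obtain ⟨a, ha⟩ := rot_circ h x
  rw [ha]; exact circ_norm h x _

lemma kac_row {d T : ℕ} : ∀ (ω : Fin T → (Fin d × Fin d) × ℝ) (_ : ∀ t, (ω t).1.1 ≠ (ω t).1.2)
    (v : Fin d → ℝ), ∑ k, (Matrix.vecMul v (kacMatrix ω)) k ^ 2 = ∑ k, v k ^ 2 := by
  induction T with
  | zero => intro ω _ v; simp [kacMatrix]
  | succ T ih =>
    intro ω h v
    rw [kacMatrix_succ, ← Matrix.vecMul_vecMul, ← Matrix.mulVec_transpose, rot_transpose (h 0),
      rot_norm (h 0), ih _ fun t => h _]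

lemma ae_ne {d : ℕ} (hd : 2 ≤ d) (T : ℕ) :
    ∀ᵐ ω ∂(Measure.pi fun _ : Fin T => kacParam d), ∀ t, (ω t).1.1 ≠ (ω t).1.2 := by
  have := kac_prob hd
  have := pair_prob hd
  rw [ae_all_iff]
  intro t
  have h0 : ∀ᵐ p ∂(pairUniform d), p.1 ≠ p.2 := by
    unfold pairUniform
    apply Measure.ae_smul_measure
    exact ae_restrict_mem (by measurability)
  have h1 : ∀ᵐ p ∂(kacParam d), p.1.1 ≠ p.1.2 := by
    unfold kacParam
    exact Measure.quasiMeasurePreserving_fst.ae h0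
  exact (Measure.tendsto_eval_ae_ae (μ := fun _ : Fin T => kacParam d) (i := t)).eventually h1

def gg {d : ℕ} (s : ℝ) (y : Fin d → ℝ) : ℝ :=
  ∑ i, exp (-(d * s * s)) * (exp (d * s * y i) + exp (-(d * s) * y i))

lemma gg_nonneg {d : ℕ} (s : ℝ) (y : Fin d → ℝ) : 0 ≤ gg s y := by
  unfold gg; positivity

lemma gg_ge {d : ℕ} {s : ℝ} (hs : 0 ≤ s) (y : Fin d → ℝ) (i : Fin d) (h : s ≤ |y i|) :
    1 ≤ gg s y := by
  have h1 : exp (-(d * s * s)) * (exp (d * s * y i) + exp (-(d * s) * y i)) ≤ gg s y :=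
    Finset.single_le_sum (f := fun i => exp (-(d * s * s)) * (exp (d * s * y i) + exp (-(d * s) * y i)))
      (fun _ _ => by positivity) (Finset.mem_univ i)
  refine le_trans ?_ h1
  rw [mul_add, ← exp_add, ← exp_add]
  have hds : 0 ≤ d * s := by positivity
  rcases le_abs'.1 h with h | h
  · have : 1 ≤ exp (-(d * s * s) + -(d * s) * y i) := one_le_exp (by nlinarith)
    have := exp_pos (-(d * s * s) + d * s * y i)
    linarith
  · have : 1 ≤ exp (-(d * s * s) + d * s * y i) := one_le_exp (by nlinarith)
    have := exp_pos (-(d * s * s) + -(d * s) * y i)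
    linarith

lemma gg_avg {d : ℕ} (hd : 0 < d) (s : ℝ) (A : Matrix (Fin d) (Fin d) ℝ)
    (hA : ∀ i, ∑ k, A i k ^ 2 = 1) :
    ∑ ε : Fin d → Bool, gg s (A.mulVec (sg ε)) ≤ 2 ^ d * (2 * d * exp (-(d * s ^ 2) / 2)) := by
  have hd' : (0:ℝ) < d := by exact_mod_cast hd
  unfold gg
  rw [Finset.sum_comm]
  have : ∀ i ∈ (Finset.univ : Finset (Fin d)), ∑ ε : Fin d → Bool, exp (-(d * s * s)) * (exp (d * s * (A.mulVec (sg ε)) i)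
      + exp (-(d * s) * (A.mulVec (sg ε)) i)) ≤ 2 ^ d * (2 * exp (-(d * s ^ 2) / 2)) := by
    intro i _
    rw [← Finset.mul_sum, Finset.sum_add_distrib]
    have h1 := sg_mgf hd (A i) (hA i) (d * s)
    have h2 := sg_mgf hd (A i) (hA i) (-(d * s))
    rw [neg_sq] at h2
    have e : exp (-(d * s ^ 2) / 2) = exp (-(d * s * s)) * exp ((d * s) ^ 2 / (2 * d)) := by
      rw [← exp_add]; congr 1; field_simp; ring
    rw [e]
    calc _ ≤ exp (-(d * s * s)) * (2 ^ d * exp ((d * s) ^ 2 / (2 * d)) + 2 ^ d * exp ((d * s) ^ 2 / (2 * d))) := by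
          gcongr
          · exact h1
          · exact h2
      _ = _ := by ring
  refine (Finset.sum_le_sum this).trans (le_of_eq ?_)
  simp; ring

lemma DD_start {d : ℕ} (hd : 0 < d) (j : Fin d) (ε : Fin d → Bool) :
    DD (Pi.single j 1) (sg ε) = 1 - 1 / d := by
  have hd' : (0:ℝ) < d := by exact_mod_cast hd
  unfold DD
  have : ∀ k, ((Pi.single j 1 : Fin d → ℝ) k ^ 2 - sg ε k ^ 2) ^ 2
      = (if k = j then 1 - 2 / (d:ℝ) else 0) + 1 / (d:ℝ) ^ 2 := by
    intro k
    rw [sg_sq]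
    by_cases h : k = j
    · subst h; simp; ring
    · simp [h]
  simp only [this, Finset.sum_add_distrib, Finset.sum_ite_eq', Finset.mem_univ, if_true,
    Finset.sum_const, Finset.card_univ, Fintype.card_fin, nsmul_eq_mul]
  field_simp; ring

lemma col_bound {d : ℕ} (hd : 2 ≤ d) (T : ℕ) (j : Fin d) {s S δ : ℝ} (hs : 0 ≤ s) (hS : 0 ≤ S)
    (hδ : 0 < δ) (h : s ^ 2 + δ ≤ S ^ 2) :
    (Measure.pi fun _ : Fin T => kacParam d) {ω | ∃ i, S ≤ |kacMatrix ω i j|} ≤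
      ENNReal.ofReal (2 * d * exp (-(d * s ^ 2) / 2) +
        (δ ^ 2)⁻¹ * (1 - 1 / (2 * d)) ^ T * (1 - 1 / d)) := by
  have := kac_prob hd
  have hd' : (2:ℝ) ≤ d := by exact_mod_cast hd
  have hρ : (0:ℝ) ≤ 1 - 1 / (2 * d) := by
    rw [sub_nonneg, div_le_one (by linarith)]; linarith
  have hρ' : (0:ℝ) ≤ 1 - 1 / d := by
    rw [sub_nonneg, div_le_one (by linarith)]; linarith
  let E : Set (Fin d → ℝ) := {x | ∃ i, S ≤ |x i|}
  have hE : MeasurableSet E := by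
    have : E = ⋃ i, {x | S ≤ |x i|} := by ext; simp [E]
    rw [this]
    exact MeasurableSet.iUnion fun i => measurableSet_le measurable_const (by fun_prop)
  let f : (Fin d → ℝ) → ℝ≥0∞ := E.indicator 1
  have hf : Measurable f := measurable_one.indicator hE
  let g : (Fin d → ℝ) → ℝ≥0∞ := fun y => ENNReal.ofReal (gg s y)
  have hg : Measurable g := by
    refine Measurable.ennreal_ofReal ?_
    unfold gg
    fun_prop
  have hfg : ∀ x y : Fin d → ℝ, ∑ k, x k ^ 2 = ∑ k, y k ^ 2 →
      f x ≤ g y + ENNReal.ofReal ((δ ^ 2)⁻¹ * DD x y) := by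
    intro x y _
    by_cases hx : x ∈ E
    swap
    · simp [f, hx]
    have : f x = 1 := by simp [f, hx]
    rw [this]
    obtain ⟨i, hi⟩ := hx
    by_cases hy : s ≤ |y i|
    · refine le_add_right ?_
      simpa [g] using gg_ge hs y i hy
    · refine le_add_left ?_
      rw [← ENNReal.ofReal_one]
      apply ENNReal.ofReal_le_ofReal
      rw [le_inv_mul_iff₀ (by positivity), mul_one]
      have h1 : S ^ 2 ≤ x i ^ 2 := by rw [← sq_abs (x i)]; gcongr
      have h2 : y i ^ 2 ≤ s ^ 2 := by rw [← sq_abs (y i)]; push Not at hy; gcongr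
      have h3 : (x i ^ 2 - y i ^ 2) ^ 2 ≤ DD x y :=
        Finset.single_le_sum (f := fun k => (x k ^ 2 - y k ^ 2) ^ 2)
          (fun _ _ => sq_nonneg _) (Finset.mem_univ i)
      refine le_trans ?_ h3
      gcongr
      linarith
  set B : ℝ := (δ ^ 2)⁻¹ * (1 - 1 / (2 * d)) ^ T * (1 - 1 / d) with hB
  have hB0 : 0 ≤ B := by positivity
  set M : ℝ := 2 * d * exp (-(d * s ^ 2) / 2) with hM
  have hM0 : 0 ≤ M := by positivity
  have hP : (Measure.pi fun _ : Fin T => kacParam d) {ω | ∃ i, S ≤ |kacMatrix ω i j|}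
      ≤ EK d T f (Pi.single j 1) := by
    have hms : MeasurableSet {ω : Fin T → (Fin d × Fin d) × ℝ | ∃ i, S ≤ |kacMatrix ω i j|} := by
      have : {ω : Fin T → (Fin d × Fin d) × ℝ | ∃ i, S ≤ |kacMatrix ω i j|}
        = ⋃ i, {ω | S ≤ |kacMatrix ω i j|} := by ext; simp
      rw [this]
      exact MeasurableSet.iUnion fun i => measurableSet_le measurable_const (measurable_kac d T i j).abs
    rw [← lintegral_indicator_one hms]
    unfold EK
    refine lintegral_mono fun ω => ?_
    by_cases hω : ω ∈ {ω : Fin T → (Fin d × Fin d) × ℝ | ∃ i, S ≤ |kacMatrix ω i j|}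
    · have : (kacMatrix ω).mulVec (Pi.single j 1) ∈ E := by
        simpa [E] using hω
      simp only [f]
      rw [Set.indicator_of_mem hω, Set.indicator_of_mem this]
      simp
    · simp [hω]
  refine hP.trans ?_
  have hε : ∀ ε : Fin d → Bool, EK d T f (Pi.single j 1) ≤ EK d T g (sg ε) + ENNReal.ofReal B := by
    intro ε
    have := coupling hd hf hg (by positivity) hfg T (Pi.single j 1) (sg ε) ?_
    · rwa [DD_start (by omega)] at this
    · have h0 : (d:ℝ) ≠ 0 := by positivity
      simp only [sg_sq]
      simp [Pi.single_apply, h0]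
  have hsum : ∑ ε : Fin d → Bool, EK d T g (sg ε) ≤ ENNReal.ofReal (2 ^ d * M) := by
    unfold EK
    have hmg : ∀ ε : Fin d → Bool, Measurable fun ω : Fin T → (Fin d × Fin d) × ℝ =>
        g ((kacMatrix ω).mulVec (sg ε)) := fun ε =>
      hg.comp (measurable_kacv2 d T (fun ω => ω) (fun _ => sg ε) measurable_id measurable_const)
    rw [← lintegral_finsetSum _ fun ε _ => hmg ε]
    have : ∫⁻ _, ENNReal.ofReal (2 ^ d * M) ∂(Measure.pi fun _ : Fin T => kacParam d)
      = ENNReal.ofReal (2 ^ d * M) := by simp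
    rw [← this]
    refine lintegral_mono_ae ?_
    filter_upwards [ae_ne hd T] with ω hω
    simp only [g]
    rw [← ENNReal.ofReal_sum_of_nonneg fun _ _ => gg_nonneg _ _]
    apply ENNReal.ofReal_le_ofReal
    apply gg_avg (by omega)
    intro i
    have := kac_row ω hω (Pi.single i 1)
    simpa [Pi.single_apply] using this
  have hall : (2:ℝ≥0∞) ^ d * EK d T f (Pi.single j 1) ≤ 2 ^ d * ENNReal.ofReal (M + B) := by
    have h1 : ∑ ε : Fin d → Bool, EK d T f (Pi.single j 1) ≤
        ∑ ε : Fin d → Bool, (EK d T g (sg ε) + ENNReal.ofReal B) :=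
      Finset.sum_le_sum fun ε _ => hε ε
    rw [Finset.sum_add_distrib] at h1
    simp only [Finset.sum_const, Finset.card_univ, Fintype.card_fun, Fintype.card_bool,
      Fintype.card_fin, nsmul_eq_mul, Nat.cast_pow, Nat.cast_ofNat] at h1
    refine h1.trans ?_
    rw [ENNReal.ofReal_add hM0 hB0, mul_add]
    gcongr
    refine hsum.trans (le_of_eq ?_)
    rw [ENNReal.ofReal_mul (by positivity), ENNReal.ofReal_pow (by norm_num)]
    simp
  exact (ENNReal.mul_le_mul_iff_right (by simp) (by simp)).1 hall

/-- **Lemma 3.4(2)**: with high probability all entries of the Kac walk matrix are small. -/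
theorem kac_entries_bounded
    {d : ℕ} (K : ℝ) (hK : 2 ≤ K) (t : ℕ) :
    kacMeasure d t {Q : Matrix (Fin d) (Fin d) ℝ |
        ∃ i j : Fin d, K * Real.sqrt (Real.log d / d) ≤ |Q i j|} ≤
      ENNReal.ofReal (2 * d ^ 3 * Real.exp (-(t : ℝ) / (2 * d)) +
        2 * (d : ℝ) ^ ((5 : ℝ) / 2) * Real.exp (-(K ^ 2 * Real.log d) / 2)) := by
  have hmk : Measurable (kacMatrix : (Fin t → (Fin d × Fin d) × ℝ) → Matrix (Fin d) (Fin d) ℝ) :=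
    measurable_pi_lambda _ fun i => measurable_pi_lambda _ fun j => measurable_kac d t i j
  have hent : ∀ i j : Fin d, Measurable fun Q : Matrix (Fin d) (Fin d) ℝ => Q i j := fun i j =>
    (measurable_pi_apply j).comp (measurable_pi_apply i)
  have hms : MeasurableSet {Q : Matrix (Fin d) (Fin d) ℝ |
        ∃ i j : Fin d, K * Real.sqrt (Real.log d / d) ≤ |Q i j|} := by
    have : {Q : Matrix (Fin d) (Fin d) ℝ |
        ∃ i j : Fin d, K * Real.sqrt (Real.log d / d) ≤ |Q i j|} = ⋃ i, ⋃ j,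
        {Q : Matrix (Fin d) (Fin d) ℝ | K * Real.sqrt (Real.log d / d) ≤ |Q i j|} := by ext; simp
    rw [this]
    exact MeasurableSet.iUnion fun i => MeasurableSet.iUnion fun j =>
      measurableSet_le measurable_const (hent i j).abs
  rw [kacMeasure, Measure.map_apply hmk hms]
  rcases Nat.lt_or_ge d 2 with hd | hd
  · interval_cases d
    · simp
    · have hz : kacParam 1 = 0 := by
        have : pairUniform 1 = 0 := by
          have : {p : Fin 1 × Fin 1 | p.1 ≠ p.2} = ∅ := by
            ext p; simp [Subsingleton.elim p.1 p.2]
          simp [pairUniform, this]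
        simp [kacParam, this]
      rw [hz]
      calc _ ≤ (Measure.pi fun _ : Fin t => (0 : Measure ((Fin 1 × Fin 1) × ℝ))) Set.univ :=
            measure_mono (Set.subset_univ _)
        _ ≤ 1 := by
            rw [Measure.pi_univ]; simp [pow_le_one']
        _ ≤ _ := by
            rw [← ENNReal.ofReal_one]
            apply ENNReal.ofReal_le_ofReal
            have := exp_pos (-(t : ℝ) / (2 * (1:ℕ)))
            have h2 : (2:ℝ) * ((1:ℕ):ℝ) ^ ((5 : ℝ) / 2) * Real.exp (-(K ^ 2 * Real.log (1:ℕ)) / 2) = 2 := by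
              simp
            rw [h2]
            have : 0 ≤ 2 * (((1:ℕ):ℝ)) ^ 3 * exp (-(t : ℝ) / (2 * (1:ℕ))) := by positivity
            linarith
  have hd' : (2:ℝ) ≤ d := by exact_mod_cast hd
  have hd0 : (0:ℝ) < d := by linarith
  have hlog : 0 < log d := log_pos (by linarith)
  have hδ : 0 < log d / d := by positivity
  have hK1 : 0 ≤ K ^ 2 - 1 := by nlinarith
  have hsub : kacMatrix ⁻¹' {Q : Matrix (Fin d) (Fin d) ℝ |
        ∃ i j : Fin d, K * Real.sqrt (Real.log d / d) ≤ |Q i j|} ⊆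
      ⋃ j : Fin d, {ω : Fin t → (Fin d × Fin d) × ℝ | ∃ i, K * √(log d / d) ≤ |kacMatrix ω i j|} := by
    rintro ω ⟨i, j, h⟩
    exact Set.mem_iUnion.2 ⟨j, i, h⟩
  refine (measure_mono hsub).trans ((measure_iUnion_le _).trans ?_)
  rw [tsum_fintype]
  refine (Finset.sum_le_sum fun j _ => col_bound hd t j
    (s := √((K ^ 2 - 1) * (log d / d))) (δ := log d / d) (sqrt_nonneg _) (by positivity) hδ ?_).trans ?_
  · rw [sq_sqrt (by positivity), mul_pow, sq_sqrt (by positivity)]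
    linarith
  rw [Finset.sum_const, Finset.card_univ, Fintype.card_fin, nsmul_eq_mul, ← ENNReal.ofReal_natCast,
    ← ENNReal.ofReal_mul hd0.le, sq_sqrt (by positivity)]
  apply ENNReal.ofReal_le_ofReal
  rw [mul_add, add_comm]
  apply add_le_add
  · have hz : 1 - 1 / (d:ℝ) ≤ log d := by
      have := Real.one_sub_inv_le_log_of_pos hd0
      simpa using this
    have hz2 : 1 / 2 ≤ 1 - 1 / (d:ℝ) := by
      have : 1 / (d:ℝ) ≤ 1 / 2 := by gcongr
      linarith
    have hz3 : 1 - 1 / (d:ℝ) ≤ 2 * log d ^ 2 := by nlinarith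
    have hρ : (0:ℝ) ≤ 1 - 1 / (2 * d) := by
      rw [sub_nonneg, div_le_one (by linarith)]; linarith
    have he : (1 - 1 / (2 * (d:ℝ))) ^ t ≤ exp (-(t:ℝ) / (2 * d)) := by
      calc _ ≤ (exp (-(1 / (2 * (d:ℝ))))) ^ t := by
            gcongr
            exact Real.one_sub_le_exp_neg _
        _ = _ := by rw [← exp_nat_mul]; congr 1; ring
    calc (d:ℝ) * (((log d / d) ^ 2)⁻¹ * (1 - 1 / (2 * (d:ℝ))) ^ t * (1 - 1 / d))
        ≤ d * (((log d / d) ^ 2)⁻¹ * exp (-(t:ℝ) / (2 * d)) * (2 * log d ^ 2)) := by gcongr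
      _ = _ := by field_simp
  · have e : (d:ℝ) ^ ((5:ℝ)/2) = d ^ 2 * exp (log d / 2) := by
      rw [show (5:ℝ)/2 = 2 + 1/2 by norm_num, rpow_add hd0, rpow_two, rpow_def_of_pos hd0]
      congr 2; ring
    have e2 : exp (-(d * ((K ^ 2 - 1) * (log d / d))) / 2)
        = exp (log d / 2) * exp (-(K ^ 2 * log d) / 2) := by
      rw [← exp_add]; congr 1; field_simp; ring
    rw [e, e2]
    apply le_of_eq; ring

end KacJL
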